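/- Let N ≥ 1. The constant (√(ℓ_N) ω_{N−1})^{−1} in the inequality ‖u‖_∞ ≤ C ∫_{ℝ^N} |∇^N u| is optimal: for every ε > 0 there exists a nonzero u ∈ C_c^∞(ℝ^N) with ∫_{ℝ^N} |∇^N u(x)| dx < (√(ℓ_N) · ω_{N−1} + ε) · ‖u‖_∞. Equivalently, the infimum of ∫_{ℝ^N} |∇^N u| / ‖u‖_∞ over nonzero u ∈ C_c^∞(ℝ^N) equals √(ℓ_N) ω_{N−1}. -/

import Mathlib

open MeasureTheory Metric Filter Matrix

noncomputable section

/-- The mixed partial derivative `∂^m u / ∂x_{i 0} ⋯ ∂x_{i (m-1)} (x)`, realized as the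
iterated Fréchet derivative applied to the corresponding standard basis vectors. -/
def mixedPartial (N m : ℕ) (u : EuclideanSpace ℝ (Fin N) → ℝ)
    (i : Fin m → Fin N) (x : EuclideanSpace ℝ (Fin N)) : ℝ :=
  iteratedFDeriv ℝ m u x fun k => EuclideanSpace.single (i k) 1

/-- The Frobenius norm `|∇^m u (x)|` of the tensor of `m`-th order partial derivatives. -/
def gradNorm (N m : ℕ) (u : EuclideanSpace ℝ (Fin N) → ℝ)
    (x : EuclideanSpace ℝ (Fin N)) : ℝ :=
  Real.sqrt (∑ i : Fin m → Fin N, mixedPartial N m u i x ^ 2)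

/-- The function `x ↦ log |x|`. -/
def logNorm (N : ℕ) (x : EuclideanSpace ℝ (Fin N)) : ℝ := Real.log ‖x‖

/-- The constant `ℓ_N = ∑ (∂^N log|x|/∂x_{i_1}⋯∂x_{i_N} (e_1))²`. -/
def ell (N : ℕ) (hN : 0 < N) : ℝ :=
  ∑ i : Fin N → Fin N,
    mixedPartial N N (logNorm N) i (EuclideanSpace.single (⟨0, hN⟩ : Fin N) 1) ^ 2

/-- `ω_{N-1}`, the surface measure of the unit sphere `𝕊^{N-1} ⊂ ℝ^N`,
expressed as `N` times the volume of the unit ball. -/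
def omegaSphere (N : ℕ) : ℝ :=
  N * (volume (ball (0 : EuclideanSpace ℝ (Fin N)) 1)).toReal

theorem frob_invariant {N m : ℕ}
    (T : ContinuousMultilinearMap ℝ (fun _ : Fin m => EuclideanSpace ℝ (Fin N)) ℝ)
    (L : EuclideanSpace ℝ (Fin N) ≃ₗᵢ[ℝ] EuclideanSpace ℝ (Fin N)) :
    ∑ i : Fin m → Fin N, (T fun k => L (EuclideanSpace.single (i k) 1)) ^ 2 =
      ∑ i : Fin m → Fin N, (T fun k => EuclideanSpace.single (i k) 1) ^ 2 := by
  classical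
  set a : Fin N → Fin N → ℝ := fun k j => L (EuclideanSpace.single j 1) k with ha
  have hexp : ∀ j, L (EuclideanSpace.single j 1) =
      ∑ k, a k j • (EuclideanSpace.single k 1 : EuclideanSpace ℝ (Fin N)) := by
    intro j
    ext l
    simp [ha, Finset.sum_apply, Pi.single_apply]
  have horth : ∀ k k', ∑ j, a k j * a k' j = if k = k' then (1 : ℝ) else 0 := by
    intro k k'
    have h := ((EuclideanSpace.basisFun (Fin N) ℝ).map L).sum_inner_mul_inner
      (EuclideanSpace.single k (1 : ℝ)) (EuclideanSpace.single k' (1 : ℝ))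
    simp only [OrthonormalBasis.map_apply, EuclideanSpace.basisFun_apply,
      EuclideanSpace.inner_single_left, EuclideanSpace.inner_single_right] at h
    simpa [ha, Pi.single_apply, eq_comm (a := k)] using h
  have hT : ∀ i : Fin m → Fin N, (T fun k => L (EuclideanSpace.single (i k) 1)) =
      ∑ j : Fin m → Fin N, (∏ k, a (j k) (i k)) * T fun k => EuclideanSpace.single (j k) 1 := by
    intro i
    simp_rw [hexp]
    rw [T.map_sum]
    refine Finset.sum_congr rfl fun j _ => ?_
    rw [T.map_smul_univ, smul_eq_mul]
  simp_rw [hT, sq, Finset.sum_mul_sum]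
  rw [Finset.sum_comm]
  refine Finset.sum_congr rfl fun j _ => ?_
  rw [Finset.sum_comm]
  have key : ∀ j' : Fin m → Fin N, ∑ i : Fin m → Fin N,
      (∏ k, a (j k) (i k)) * (∏ k, a (j' k) (i k)) = if j = j' then (1 : ℝ) else 0 := by
    intro j'
    simp_rw [← Finset.prod_mul_distrib]
    have := Finset.prod_univ_sum (fun _ : Fin m => (Finset.univ : Finset (Fin N)))
      (fun k l => a (j k) l * a (j' k) l)
    rw [Fintype.piFinset_univ] at this
    rw [← this]
    simp_rw [horth]
    rw [Finset.prod_ite_zero]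
    simp [funext_iff]
  rw [Finset.sum_eq_single j]
  · have := key j
    simp only [if_true] at this
    calc _ = (∑ i : Fin m → Fin N, (∏ k, a (j k) (i k)) * (∏ k, a (j k) (i k))) *
        ((T fun k => EuclideanSpace.single (j k) 1) * T fun k => EuclideanSpace.single (j k) 1) := by
          rw [Finset.sum_mul]; exact Finset.sum_congr rfl fun _ _ => by ring
      _ = _ := by rw [this, one_mul]
  · intro j' _ hj'
    have := key j'
    rw [if_neg hj'.symm] at this
    calc _ = (∑ i : Fin m → Fin N, (∏ k, a (j k) (i k)) * (∏ k, a (j' k) (i k))) *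
        ((T fun k => EuclideanSpace.single (j k) 1) * T fun k => EuclideanSpace.single (j' k) 1) := by
          rw [Finset.sum_mul]; exact Finset.sum_congr rfl fun _ _ => by ring
      _ = _ := by rw [this, zero_mul]
  · simp

theorem exists_rot {N : ℕ} (e x : EuclideanSpace ℝ (Fin N)) (he : ‖e‖ = 1) (hx : x ≠ 0) :
    ∃ L : EuclideanSpace ℝ (Fin N) ≃ₗᵢ[ℝ] EuclideanSpace ℝ (Fin N), x = ‖x‖ • L e := by
  have hx' : ‖x‖ ≠ 0 := norm_ne_zero_iff.2 hx
  have h : ‖e‖ = ‖(‖x‖⁻¹ • x)‖ := by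
    rw [norm_smul, norm_inv, norm_norm, inv_mul_cancel₀ hx', he]
  refine ⟨Submodule.reflection (Submodule.span ℝ {e - ‖x‖⁻¹ • x})ᗮ, ?_⟩
  rw [Submodule.reflection_sub h, smul_smul, mul_inv_cancel₀ hx', one_smul]

theorem logNorm_contDiffAt {N : ℕ} {n : ℕ∞} {x : EuclideanSpace ℝ (Fin N)} (hx : x ≠ 0) :
    ContDiffAt ℝ n (logNorm N) x :=
  (contDiffAt_norm ℝ hx).log (norm_ne_zero_iff.2 hx)

theorem logNorm_scale {N : ℕ} (m : ℕ) (hm : m ≠ 0) (e : EuclideanSpace ℝ (Fin N)) (he : ‖e‖ = 1)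
    (ρ : ℝ) (hρ : 0 < ρ)
    (L : EuclideanSpace ℝ (Fin N) ≃ₗᵢ[ℝ] EuclideanSpace ℝ (Fin N))
    (v : Fin m → EuclideanSpace ℝ (Fin N)) :
    iteratedFDeriv ℝ m (logNorm N) e v =
      ρ ^ m * iteratedFDeriv ℝ m (logNorm N) (ρ • L e) fun k => L (v k) := by
  have he0 : e ≠ 0 := by intro h; simp [h] at he
  set g : EuclideanSpace ℝ (Fin N) ≃L[ℝ] EuclideanSpace ℝ (Fin N) :=
    L.toContinuousLinearEquiv.trans
      (ContinuousLinearEquiv.smulLeft (Units.mk0 ρ hρ.ne')) with hg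
  have hga : ∀ y, g y = ρ • L y := fun y => rfl
  have h1 := ContinuousLinearEquiv.iteratedFDerivWithin_comp_right g (logNorm N)
    uniqueDiffOn_univ (x := e) (Set.mem_univ _) m
  rw [Set.preimage_univ, iteratedFDerivWithin_univ, iteratedFDerivWithin_univ] at h1
  have h2 : (logNorm N ∘ g) =ᶠ[nhds e] ((fun _ => Real.log ρ) + logNorm N) := by
    filter_upwards [isOpen_ne.mem_nhds he0] with y hy
    simp only [Function.comp, hga, logNorm, Pi.add_apply, norm_smul, Real.norm_eq_abs,
      abs_of_pos hρ, LinearIsometryEquiv.norm_map]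
    rw [Real.log_mul hρ.ne' (norm_ne_zero_iff.2 hy)]
  have h3 := h2.iteratedFDeriv ℝ m |>.eq_of_nhds
  rw [iteratedFDeriv_add_apply contDiffAt_const (logNorm_contDiffAt (n := (m : ℕ∞)) he0),
    iteratedFDeriv_const_of_ne hm] at h3
  simp only [Pi.zero_apply, zero_add] at h3
  rw [← h3, h1]
  simp only [ContinuousMultilinearMap.compContinuousLinearMap_apply]
  simp only [ContinuousLinearEquiv.coe_coe, hga]
  have := (iteratedFDeriv ℝ m (logNorm N) (ρ • L e)).map_smul_univ (fun _ => ρ) (fun k => L (v k))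
  simpa using this

theorem logNorm_grad {N : ℕ} (hN : 0 < N) (x : EuclideanSpace ℝ (Fin N)) (hx : x ≠ 0) :
    gradNorm N N (logNorm N) x = Real.sqrt (ell N hN) / ‖x‖ ^ N := by
  set e : EuclideanSpace ℝ (Fin N) := EuclideanSpace.single (⟨0, hN⟩ : Fin N) 1 with hee
  have he : ‖e‖ = 1 := by simp [hee]
  obtain ⟨L, hL⟩ := exists_rot e x he hx
  have hρ : 0 < ‖x‖ := norm_pos_iff.2 hx
  have h : ell N hN = (‖x‖ ^ N) ^ 2 * ∑ i : Fin N → Fin N, mixedPartial N N (logNorm N) i x ^ 2 := by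
    unfold ell mixedPartial
    rw [← frob_invariant (iteratedFDeriv ℝ N (logNorm N) x) L, Finset.mul_sum]
    refine Finset.sum_congr rfl fun i _ => ?_
    rw [logNorm_scale N hN.ne' e he ‖x‖ hρ L, ← hL, mul_pow]
  unfold gradNorm
  rw [h, Real.sqrt_mul (by positivity), Real.sqrt_sq (by positivity)]
  field_simp

theorem logNorm_opnorm {N : ℕ} (m : ℕ) (hm : m ≠ 0) (e : EuclideanSpace ℝ (Fin N)) (he : ‖e‖ = 1)
    (x : EuclideanSpace ℝ (Fin N)) (hx : x ≠ 0) :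
    ‖iteratedFDeriv ℝ m (logNorm N) x‖ ≤ ‖iteratedFDeriv ℝ m (logNorm N) e‖ / ‖x‖ ^ m := by
  obtain ⟨L, hL⟩ := exists_rot e x he hx
  have hρ : 0 < ‖x‖ := norm_pos_iff.2 hx
  refine ContinuousMultilinearMap.opNorm_le_bound (by positivity) fun w => ?_
  have h := logNorm_scale m hm e he ‖x‖ hρ L (fun k => L.symm (w k))
  rw [← hL] at h
  simp only [LinearIsometryEquiv.apply_symm_apply] at h
  have h2 := (iteratedFDeriv ℝ m (logNorm N) e).le_opNorm (fun k => L.symm (w k))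
  rw [h, norm_mul, norm_pow, norm_norm] at h2
  simp only [LinearIsometryEquiv.norm_map] at h2
  rw [div_mul_eq_mul_div, le_div_iff₀ (by positivity)]
  linarith

theorem gradNorm_le {N m : ℕ} (u w : EuclideanSpace ℝ (Fin N) → ℝ)
    (x : EuclideanSpace ℝ (Fin N)) (a : ℝ)
    (R : ContinuousMultilinearMap ℝ (fun _ : Fin m => EuclideanSpace ℝ (Fin N)) ℝ)
    (h : iteratedFDeriv ℝ m u x = a • iteratedFDeriv ℝ m w x + R) :
    gradNorm N m u x ≤ |a| * gradNorm N m w x +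
      Real.sqrt (Fintype.card (Fin m → Fin N)) * ‖R‖ := by
  have hg : ∀ f : EuclideanSpace ℝ (Fin N) → ℝ, gradNorm N m f x =
      ‖(WithLp.toLp 2 (fun i : Fin m → Fin N => mixedPartial N m f i x))‖ := by
    intro f
    rw [EuclideanSpace.norm_eq]
    simp [gradNorm]
  have hR : ‖(WithLp.toLp 2 (fun i : Fin m → Fin N =>
      R fun k => EuclideanSpace.single (i k) 1))‖ ≤
      Real.sqrt (Fintype.card (Fin m → Fin N)) * ‖R‖ := by
    rw [EuclideanSpace.norm_eq]
    have hb : ∑ i : Fin m → Fin N, ‖R fun k => EuclideanSpace.single (i k) (1 : ℝ)‖ ^ 2 ≤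
        ∑ i : Fin m → Fin N, ‖R‖ ^ 2 := by
      refine Finset.sum_le_sum fun i _ => ?_
      gcongr
      refine (R.le_opNorm _).trans (le_of_eq ?_)
      simp
    refine (Real.sqrt_le_sqrt hb).trans (le_of_eq ?_)
    rw [Finset.sum_const, nsmul_eq_mul, Real.sqrt_mul (by positivity),
      Real.sqrt_sq (norm_nonneg _), Finset.card_univ]
  rw [hg u, hg w]
  have he : (WithLp.toLp 2 (fun i : Fin m → Fin N => mixedPartial N m u i x)) =
      a • (WithLp.toLp 2 (fun i : Fin m → Fin N => mixedPartial N m w i x)) +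
        (WithLp.toLp 2 (fun i : Fin m → Fin N => R fun k => EuclideanSpace.single (i k) 1)) := by
    ext i
    simp [mixedPartial, h]
  rw [he]
  refine (norm_add_le _ _).trans ?_
  rw [norm_smul, Real.norm_eq_abs]
  gcongr

theorem iteratedDeriv_rem (S : ℝ → ℝ) (hS : ContDiff ℝ (⊤ : ℕ∞) S) (c t : ℝ) (hc : |c| ≤ 1)
    (K : ℝ) (i : ℕ) (hK : |iteratedDeriv i S (c * t)| ≤ K) :
    |iteratedDeriv i (fun y => S (c * y) - (c * deriv S (c * t) * y
      + (S (c * t) - c * deriv S (c * t) * t))) t| ≤ c ^ 2 * K := by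
  have hK0 : 0 ≤ K := (abs_nonneg _).trans hK
  have hSi : ContDiff ℝ i S := hS.of_le (by exact_mod_cast le_top)
  rw [iteratedDeriv_fun_sub (by fun_prop) (by fun_prop)]
  rw [iteratedDeriv_comp_const_mul hSi]
  match i with
  | 0 =>
    simp only [iteratedDeriv_zero]
    have : c ^ 0 * S (c * t) - (c * deriv S (c * t) * t + (S (c * t) - c * deriv S (c * t) * t)) = 0 := by
      ring
    rw [this, abs_zero]; positivity
  | 1 =>
    have hd : deriv (fun y => c * deriv S (c * t) * y + (S (c * t) - c * deriv S (c * t) * t)) t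
      = c * deriv S (c * t) := by
      simp
    rw [iteratedDeriv_one, iteratedDeriv_one, hd]
    simp; positivity
  | (k + 2) =>
    have hd : iteratedDeriv (k + 2)
        (fun y => c * deriv S (c * t) * y + (S (c * t) - c * deriv S (c * t) * t)) = 0 := by
      rw [iteratedDeriv_succ', iteratedDeriv_succ']
      have : deriv (deriv (fun y => c * deriv S (c * t) * y
          + (S (c * t) - c * deriv S (c * t) * t))) = fun _ => 0 := by
        have h1 : deriv (fun y => c * deriv S (c * t) * y
          + (S (c * t) - c * deriv S (c * t) * t)) = fun _ => c * deriv S (c * t) := by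
          ext y; simp
        rw [h1]; ext y; simp
      rw [this]
      ext y; simp
    rw [hd]
    simp only [Pi.zero_apply, sub_zero, abs_mul, abs_pow, pow_add]
    have h1 : |c| ^ k ≤ 1 := pow_le_one₀ (abs_nonneg _) hc
    calc |c| ^ k * |c| ^ 2 * |iteratedDeriv (k + 2) S (c * t)| ≤ 1 * |c| ^ 2 * K := by gcongr
      _ = c ^ 2 * K := by rw [sq_abs]; ring

theorem comp_expand {N : ℕ} (hN : 0 < N) (S : ℝ → ℝ) (hS : ContDiff ℝ (⊤ : ℕ∞) S) (c : ℝ)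
    (hc : |c| ≤ 1) (x : EuclideanSpace ℝ (Fin N)) (hx : x ≠ 0) (K D : ℝ)
    (hK : ∀ i ≤ N, |iteratedDeriv i S (c * logNorm N x)| ≤ K)
    (hD : ∀ i, 1 ≤ i → i ≤ N → ‖iteratedFDeriv ℝ i (logNorm N) x‖ ≤ D ^ i) :
    gradNorm N N (fun y => S (c * logNorm N y)) x ≤
      |c * deriv S (c * logNorm N x)| * gradNorm N N (logNorm N) x +
        Real.sqrt (Fintype.card (Fin N → Fin N)) * (N.factorial * (c ^ 2 * K) * D ^ N) := by
  set t := logNorm N x with ht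
  set g : ℝ → ℝ := fun y => S (c * y) - (c * deriv S (c * t) * y
      + (S (c * t) - c * deriv S (c * t) * t)) with hg
  have hgc : ContDiff ℝ N g := by
    have : ContDiff ℝ N S := hS.of_le (by exact_mod_cast le_top)
    fun_prop
  have hopen : IsOpen ({0}ᶜ : Set (EuclideanSpace ℝ (Fin N))) := isOpen_compl_singleton
  have hlog : ContDiffOn ℝ N (logNorm N) ({0}ᶜ : Set (EuclideanSpace ℝ (Fin N))) :=
    fun y hy => (logNorm_contDiffAt (n := (N : ℕ∞)) hy).contDiffWithinAt
  have hlx : ContDiffAt ℝ N (logNorm N) x := logNorm_contDiffAt (n := (N : ℕ∞)) hx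
  have hb := norm_iteratedFDerivWithin_comp_le (n := N) (hgc.contDiffOn (s := Set.univ)) hlog le_rfl
    uniqueDiffOn_univ hopen.uniqueDiffOn (Set.mapsTo_univ _ _) (x := x) (by simpa using hx)
    (C := c ^ 2 * K) (D := D)
    (by
      intro i hi
      rw [iteratedFDerivWithin_univ, norm_iteratedFDeriv_eq_norm_iteratedDeriv]
      exact iteratedDeriv_rem S hS c t hc K i (hK i hi))
    (by
      intro i h1 h2
      rw [iteratedFDerivWithin_of_isOpen i hopen (by simpa using hx)]
      exact hD i h1 h2)
  rw [iteratedFDerivWithin_of_isOpen N hopen (by simpa using hx)] at hb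
  refine (gradNorm_le _ (logNorm N) x (c * deriv S (c * t)) (iteratedFDeriv ℝ N (g ∘ logNorm N) x) ?_).trans ?_
  · have hE : (fun y => S (c * logNorm N y)) =
        ((c * deriv S (c * t)) • logNorm N + fun _ => (S (c * t) - c * deriv S (c * t) * t))
          + g ∘ logNorm N := by
      ext y
      simp only [hg, Pi.add_apply, Pi.smul_apply, smul_eq_mul, Function.comp]
      ring
    have h1 : ContDiffAt ℝ N ((c * deriv S (c * t)) • logNorm N) x :=
      hlx.const_smul (c * deriv S (c * t))
    have h2 : ContDiffAt ℝ N ((c * deriv S (c * t)) • logNorm N +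
        fun _ => (S (c * t) - c * deriv S (c * t) * t)) x := h1.add contDiffAt_const
    rw [hE, iteratedFDeriv_add_apply h2 (hgc.contDiffAt.comp x hlx),
      iteratedFDeriv_add_apply h1 contDiffAt_const, iteratedFDeriv_const_of_ne hN.ne',
      iteratedFDeriv_const_smul_apply hlx]
    simp
  · gcongr

/-- The family of test functions. -/
def testFn (N : ℕ) (δ : ℝ) (x : EuclideanSpace ℝ (Fin N)) : ℝ :=
  if x = 0 then 1 else Real.smoothTransition (-δ * logNorm N x)

theorem testFn_eventuallyEq {N : ℕ} (δ : ℝ) {x : EuclideanSpace ℝ (Fin N)} (hx : x ≠ 0) :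
    testFn N δ =ᶠ[nhds x] fun y => Real.smoothTransition (-δ * logNorm N y) := by
  filter_upwards [isOpen_ne.mem_nhds hx] with y hy
  simp [testFn, show y ≠ 0 from hy]

theorem testFn_one {N : ℕ} {δ : ℝ} (hδ : 0 < δ) {x : EuclideanSpace ℝ (Fin N)}
    (hx : ‖x‖ < Real.exp (-1 / δ)) : testFn N δ x = 1 := by
  unfold testFn
  split_ifs with h
  · rfl
  · apply Real.smoothTransition.one_of_one_le
    have h1 : logNorm N x < -1 / δ := (Real.log_lt_iff_lt_exp (norm_pos_iff.2 h)).2 hx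
    rw [lt_div_iff₀ hδ] at h1
    linarith

theorem testFn_zero {N : ℕ} {δ : ℝ} (hδ : 0 < δ) {x : EuclideanSpace ℝ (Fin N)}
    (hx : 1 < ‖x‖) : testFn N δ x = 0 := by
  unfold testFn
  have h : x ≠ 0 := by rintro rfl; simp at hx; linarith
  rw [if_neg h]
  apply Real.smoothTransition.zero_of_nonpos
  have h1 : 0 < logNorm N x := Real.log_pos hx
  nlinarith

theorem testFn_near_one {N : ℕ} {δ : ℝ} (hδ : 0 < δ) {x : EuclideanSpace ℝ (Fin N)}
    (hx : ‖x‖ < Real.exp (-1 / δ)) : testFn N δ =ᶠ[nhds x] fun _ => 1 := by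
  filter_upwards [(isOpen_lt continuous_norm continuous_const).mem_nhds hx] with y hy
  exact testFn_one hδ hy

theorem testFn_near_zero {N : ℕ} {δ : ℝ} (hδ : 0 < δ) {x : EuclideanSpace ℝ (Fin N)}
    (hx : 1 < ‖x‖) : testFn N δ =ᶠ[nhds x] fun _ => 0 := by
  filter_upwards [(isOpen_lt continuous_const continuous_norm).mem_nhds hx] with y hy
  exact testFn_zero hδ hy

theorem testFn_contDiff {N : ℕ} {δ : ℝ} (hδ : 0 < δ) : ContDiff ℝ (⊤ : ℕ∞) (testFn N δ) := by
  rw [contDiff_iff_contDiffAt]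
  intro x
  by_cases hx : x = 0
  · exact contDiffAt_const.congr_of_eventuallyEq
      (testFn_near_one hδ (by rw [hx, norm_zero]; exact Real.exp_pos _))
  · refine ContDiffAt.congr_of_eventuallyEq ?_ (testFn_eventuallyEq δ hx)
    exact Real.smoothTransition.contDiffAt.comp x
      (contDiffAt_const.mul (logNorm_contDiffAt hx))

theorem gradNorm_congr {N : ℕ} {u w : EuclideanSpace ℝ (Fin N) → ℝ}
    {x : EuclideanSpace ℝ (Fin N)} (h : u =ᶠ[nhds x] w) : gradNorm N N u x = gradNorm N N w x := by
  unfold gradNorm mixedPartial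
  rw [(h.iteratedFDeriv ℝ N).eq_of_nhds]

theorem gradNorm_const {N : ℕ} (hN : 0 < N) (a : ℝ) (x : EuclideanSpace ℝ (Fin N)) :
    gradNorm N N (fun _ => a) x = 0 := by
  unfold gradNorm mixedPartial
  rw [iteratedFDeriv_const_of_ne hN.ne']
  simp

theorem exists_bounds (N : ℕ) (hN : 0 < N) : ∃ A : ℝ, 0 ≤ A ∧ ∀ δ : ℝ, 0 < δ → δ ≤ 1 →
    ∀ x : EuclideanSpace ℝ (Fin N), gradNorm N N (testFn N δ) x ≤
      (Set.Icc (Real.exp (-1 / δ)) 1).indicator (fun y =>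
        (Real.sqrt (ell N hN) * (δ * deriv Real.smoothTransition (-δ * Real.log y)) + δ ^ 2 * A)
          / y ^ N) ‖x‖ := by
  have hSd : ContDiff ℝ (⊤ : ℕ∞) Real.smoothTransition := Real.smoothTransition.contDiff
  have hK1 : ∀ i : ℕ, ∃ K : ℝ, ∀ t ∈ Set.Icc (0 : ℝ) 1,
      |iteratedDeriv i Real.smoothTransition t| ≤ K := by
    intro i
    have hc : Continuous (iteratedDeriv i Real.smoothTransition) :=
      hSd.continuous_iteratedDeriv i (by exact_mod_cast le_top)
    obtain ⟨K, hK⟩ := isCompact_Icc.exists_bound_of_continuousOn (hc.continuousOn (s := Set.Icc 0 1))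
    exact ⟨K, hK⟩
  choose K hK using hK1
  set e : EuclideanSpace ℝ (Fin N) := EuclideanSpace.single (⟨0, hN⟩ : Fin N) 1 with hee
  have he : ‖e‖ = 1 := by simp [hee]
  set K0 : ℝ := ∑ i ∈ Finset.range (N + 1), |K i| with hK0
  set M : ℝ := 1 + ∑ i ∈ Finset.range (N + 1), ‖iteratedFDeriv ℝ i (logNorm N) e‖ with hM
  have hM1 : 1 ≤ M := by
    have : 0 ≤ ∑ i ∈ Finset.range (N + 1), ‖iteratedFDeriv ℝ i (logNorm N) e‖ :=
      Finset.sum_nonneg fun _ _ => norm_nonneg _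
    linarith
  have hK00 : 0 ≤ K0 := Finset.sum_nonneg fun _ _ => abs_nonneg _
  refine ⟨Real.sqrt (Fintype.card (Fin N → Fin N)) * (N.factorial * K0 * M ^ N), by positivity, ?_⟩
  intro δ hδ hδ1 x
  by_cases hx1 : ‖x‖ < Real.exp (-1 / δ)
  · rw [gradNorm_congr (testFn_near_one hδ hx1), gradNorm_const hN,
      Set.indicator_of_notMem (fun h => not_lt.2 h.1 hx1)]
  by_cases hx2 : 1 < ‖x‖
  · rw [gradNorm_congr (testFn_near_zero hδ hx2), gradNorm_const hN,
      Set.indicator_of_notMem (fun h => not_lt.2 h.2 hx2)]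
  push Not at hx1 hx2
  rw [Set.indicator_of_mem (show ‖x‖ ∈ Set.Icc _ _ from ⟨hx1, hx2⟩)]
  have hpos : 0 < ‖x‖ := (Real.exp_pos _).trans_le hx1
  have hx : x ≠ 0 := norm_pos_iff.1 hpos
  rw [gradNorm_congr (testFn_eventuallyEq δ hx)]
  have hlog1 : logNorm N x ≤ 0 := Real.log_nonpos hpos.le hx2
  have hlog2 : -1 / δ ≤ logNorm N x := (Real.le_log_iff_exp_le hpos).2 hx1
  have hs : -δ * logNorm N x ∈ Set.Icc (0 : ℝ) 1 := by
    rw [div_le_iff₀ hδ] at hlog2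
    constructor <;> nlinarith
  have hmain := comp_expand hN Real.smoothTransition hSd (-δ)
    (by rw [abs_neg, abs_of_pos hδ]; exact hδ1) x hx K0 (M / ‖x‖)
    (by
      intro i hi
      refine (hK i _ hs).trans ((le_abs_self _).trans ?_)
      exact Finset.single_le_sum (f := fun i => |K i|) (fun _ _ => abs_nonneg _)
        (Finset.mem_range.2 (by omega)))
    (by
      intro i h1 h2
      refine (logNorm_opnorm i (by omega) e he x hx).trans ?_
      rw [div_pow]
      gcongr
      have h3 : ‖iteratedFDeriv ℝ i (logNorm N) e‖ ≤ M := by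
        have := Finset.single_le_sum (f := fun i => ‖iteratedFDeriv ℝ i (logNorm N) e‖)
          (fun _ _ => norm_nonneg _) (Finset.mem_range.2 (show i < N + 1 by omega))
        linarith
      exact h3.trans (le_self_pow₀ hM1 (by omega)))
  refine hmain.trans (le_of_eq ?_)
  have hd : 0 ≤ deriv Real.smoothTransition (-δ * logNorm N x) :=
    Real.smoothTransition.monotone.deriv_nonneg
  rw [logNorm_grad hN x hx, abs_mul, abs_neg, abs_of_pos hδ, abs_of_nonneg hd, div_pow]
  simp only [logNorm]
  field_simp

theorem integral_bound (N : ℕ) (hN : 0 < N) (a A δ : ℝ) (hδ : 0 < δ) :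
    Integrable (fun x : EuclideanSpace ℝ (Fin N) =>
      (Set.Icc (Real.exp (-1 / δ)) 1).indicator (fun y =>
        (a * (δ * deriv Real.smoothTransition (-δ * Real.log y)) + δ ^ 2 * A)
          / y ^ N) ‖x‖) ∧
    ∫ x : EuclideanSpace ℝ (Fin N),
      (Set.Icc (Real.exp (-1 / δ)) 1).indicator (fun y =>
        (a * (δ * deriv Real.smoothTransition (-δ * Real.log y)) + δ ^ 2 * A)
          / y ^ N) ‖x‖ = (a + δ * A) * omegaSphere N := by
  have : Nonempty (Fin N) := ⟨⟨0, hN⟩⟩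
  have : Nontrivial (EuclideanSpace ℝ (Fin N)) := inferInstance
  have hSd : ContDiff ℝ (⊤ : ℕ∞) Real.smoothTransition := Real.smoothTransition.contDiff
  set b := Real.exp (-1 / δ) with hb
  have hb0 : 0 < b := Real.exp_pos _
  have hb1 : b ≤ 1 := Real.exp_le_one_iff.2 (by
    rw [div_le_iff₀ hδ]; linarith)
  set h : ℝ → ℝ := fun y =>
    (a * (δ * deriv Real.smoothTransition (-δ * Real.log y)) + δ ^ 2 * A) / y with hh
  have hcont : ContinuousOn h (Set.Icc b 1) := by
    have h1 : Continuous (deriv Real.smoothTransition) :=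
      hSd.continuous_deriv (by exact_mod_cast le_top)
    have h2 : ContinuousOn Real.log (Set.Icc b 1) :=
      Real.continuousOn_log.mono fun y hy => (hb0.trans_le hy.1).ne'
    refine ContinuousOn.div ?_ continuousOn_id fun y hy => (hb0.trans_le hy.1).ne'
    have h3 : ContinuousOn (fun y => deriv Real.smoothTransition (-δ * Real.log y))
        (Set.Icc b 1) := h1.comp_continuousOn (continuousOn_const.mul h2)
    fun_prop
  have heq : (fun y : ℝ => y ^ (Module.finrank ℝ (EuclideanSpace ℝ (Fin N)) - 1) •
      (Set.Icc b 1).indicator (fun y =>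
        (a * (δ * deriv Real.smoothTransition (-δ * Real.log y)) + δ ^ 2 * A)
          / y ^ N) y) = (Set.Icc b 1).indicator h := by
    ext y
    rw [finrank_euclideanSpace_fin]
    by_cases hy : y ∈ Set.Icc b 1
    · rw [Set.indicator_of_mem hy, Set.indicator_of_mem hy, smul_eq_mul]
      have hy0 : y ≠ 0 := (hb0.trans_le hy.1).ne'
      obtain ⟨n, rfl⟩ : ∃ n, N = n + 1 := ⟨N - 1, by omega⟩
      simp only [hh, Nat.add_sub_cancel]
      field_simp
      ring
    · rw [Set.indicator_of_notMem hy, Set.indicator_of_notMem hy, smul_zero]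
  have hinter : Set.Ioi (0 : ℝ) ∩ Set.Icc b 1 = Set.Icc b 1 :=
    Set.inter_eq_right.2 (fun y hy => hb0.trans_le hy.1)
  constructor
  · rw [integrable_fun_norm_addHaar (μ := volume) (f := (Set.Icc b 1).indicator (fun y =>
        (a * (δ * deriv Real.smoothTransition (-δ * Real.log y)) + δ ^ 2 * A) / y ^ N)), heq]
    exact ((integrable_indicator_iff measurableSet_Icc).2
      (hcont.integrableOn_compact isCompact_Icc)).integrableOn
  · rw [integral_fun_norm_addHaar volume ((Set.Icc b 1).indicator (fun y =>
        (a * (δ * deriv Real.smoothTransition (-δ * Real.log y)) + δ ^ 2 * A) / y ^ N)), heq,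
      setIntegral_indicator measurableSet_Icc,
      hinter, integral_Icc_eq_integral_Ioc,
      ← intervalIntegral.integral_of_le hb1]
    have hftc := intervalIntegral.integral_eq_sub_of_hasDerivAt (a := b) (b := 1)
      (f := fun y => -a * Real.smoothTransition (-δ * Real.log y) + δ ^ 2 * A * Real.log y)
      (f' := h) (by
        intro y hy
        rw [Set.uIcc_of_le hb1] at hy
        have hy0 : y ≠ 0 := (hb0.trans_le hy.1).ne'
        have hl := Real.hasDerivAt_log hy0
        have hS1 : HasDerivAt Real.smoothTransition
          (deriv Real.smoothTransition (-δ * Real.log y)) (-δ * Real.log y) :=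
          (hSd.differentiable (by simp)).differentiableAt.hasDerivAt
        have := ((hS1.comp y (hl.const_mul (-δ))).const_mul (-a)).add (hl.const_mul (δ ^ 2 * A))
        refine this.congr_deriv ?_
        simp only [hh]
        field_simp)
      (by
        apply ContinuousOn.intervalIntegrable
        rwa [Set.uIcc_of_le hb1])
    rw [hftc, finrank_euclideanSpace_fin]
    have hlb : Real.log b = -1 / δ := Real.log_exp _
    have h1 : -δ * (-1 / δ) = 1 := by field_simp
    rw [hlb, h1, Real.log_one, mul_zero, Real.smoothTransition.zero, Real.smoothTransition.one]
    simp only [omegaSphere, nsmul_eq_mul, smul_eq_mul, Measure.real]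
    field_simp
    ring

/-- optimality of the constant `(√(ℓ_N) ω_{N-1})⁻¹`: for every `ε > 0` there is a
nonzero smooth compactly supported `u` with `∫ |∇^N u| < (√(ℓ_N) ω_{N-1} + ε) ‖u‖_∞`. -/
theorem statement8 (N : ℕ) (hN : 1 ≤ N) (ε : ℝ) (hε : 0 < ε) :
    ∃ u : EuclideanSpace ℝ (Fin N) → ℝ,
      ContDiff ℝ (⊤ : ℕ∞) u ∧ HasCompactSupport u ∧ u ≠ 0 ∧
        ∫ x, gradNorm N N u x <
          (Real.sqrt (ell N (by omega)) * omegaSphere N + ε) * ⨆ x, |u x| := by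

  classical
  have hN' : 0 < N := hN
  obtain ⟨A, hA, hbound⟩ := exists_bounds N hN'
  have hω : 0 ≤ omegaSphere N := by unfold omegaSphere; positivity
  set δ : ℝ := min 1 (ε / (2 * (A * omegaSphere N + 1))) with hδd
  have hδ : 0 < δ := by
    apply lt_min one_pos
    positivity
  have hδ1 : δ ≤ 1 := min_le_left _ _
  have hδ2 : δ * (A * omegaSphere N) < ε := by
    have h1 : δ ≤ ε / (2 * (A * omegaSphere N + 1)) := min_le_right _ _
    rw [le_div_iff₀ (by positivity)] at h1
    nlinarith [mul_nonneg hA hω]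
  have h0 : testFn N δ 0 = 1 := by simp [testFn]
  have hle : ∀ x, |testFn N δ x| ≤ 1 := by
    intro x
    unfold testFn
    split_ifs
    · simp
    · rw [abs_of_nonneg (Real.smoothTransition.nonneg _)]
      exact Real.smoothTransition.le_one _
  refine ⟨testFn N δ, testFn_contDiff hδ, ?_, ?_, ?_⟩
  · refine HasCompactSupport.intro (isCompact_closedBall (0 : EuclideanSpace ℝ (Fin N)) 1) ?_
    intro x hx
    apply testFn_zero hδ
    simpa using hx
  · intro h
    rw [h] at h0
    simp at h0
  · have hsup : 1 ≤ ⨆ x, |testFn N δ x| := by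
      have hbdd : BddAbove (Set.range fun x => |testFn N δ x|) :=
        ⟨1, by rintro _ ⟨x, rfl⟩; exact hle x⟩
      have := le_ciSup hbdd 0
      simpa [h0] using this
    obtain ⟨hint, hval⟩ := integral_bound N hN' (Real.sqrt (ell N hN')) A δ hδ
    have h1 : ∫ x, gradNorm N N (testFn N δ) x ≤
        (Real.sqrt (ell N hN') + δ * A) * omegaSphere N := by
      rw [← hval]
      exact integral_mono_of_nonneg (Eventually.of_forall fun x => Real.sqrt_nonneg _) hint
        (Eventually.of_forall fun x => hbound δ hδ hδ1 x)
    calc ∫ x, gradNorm N N (testFn N δ) x ≤ (Real.sqrt (ell N hN') + δ * A) * omegaSphere N := h1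
      _ < Real.sqrt (ell N hN') * omegaSphere N + ε := by nlinarith
      _ ≤ (Real.sqrt (ell N hN') * omegaSphere N + ε) * ⨆ x, |testFn N δ x| :=
        le_mul_of_one_le_right (by positivity) hsup
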